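/- arXiv:2107.03154 — 2 statements merged into one kernel-verified Lean document; each statement's English description precedes it below -/
import Mathlib

section
/- Let the free group F be the free product F = F₁ ∗ F₂ (e.g., F is the free group on a disjoint union A₁ ⊔ A₂ of two sets, F₁ is the subgroup generated by A₁, and F₂ is the subgroup generated by A₂). Let H₁ ≤ F₁ and H₂ ≤ F₂ be finitely generated subgroups. If H₁ is a dependence-closed subgroup of F₁ and H₂ is a dependence-closed subgroup of F₂, then H₁ ∗ H₂ = ⟨H₁, H₂⟩ is a dependence-closed subgroup of F. -/
open scoped Monoid.Coprod

variable {F : Type*}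

/-- The canonical homomorphism `φ_g : H ∗ ⟨x⟩ → F` from the free product of `H` with an
infinite cyclic group (the free group on one generator `x`), restricting to the inclusion
`H ↪ F` and sending `x` to `g`. -/
noncomputable def phi [Group F] (H : Subgroup F) (g : F) :
    (↥H ∗ FreeGroup Unit) →* F :=
  Monoid.Coprod.lift H.subtype (FreeGroup.lift fun _ => g)

/-- `g` depends on `H` (is algebraic over `H`) if `φ_g` is not injective. -/
def Depends [Group F] (H : Subgroup F) (g : F) : Prop :=
  ¬ Function.Injective (phi H g)

/-- `dep H`: the set of elements of `F` that depend on `H`. -/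
def depSet [Group F] (H : Subgroup F) : Set F := {g | Depends H g}

/-- `Dep H`: the subgroup generated by the elements that depend on `H`. -/
noncomputable def DepSubgroup [Group F] (H : Subgroup F) : Subgroup F :=
  Subgroup.closure (depSet H)

/-- The rank of a subgroup: the minimal cardinality of a generating set. For subgroups of
free groups this equals the cardinality of a free basis. -/
noncomputable def rk [Group F] (H : Subgroup F) : Cardinal :=
  ⨅ S : {S : Set F // Subgroup.closure S = H}, Cardinal.mk S.1


/-- `F` is the internal free product of its subgroups `F₁` and `F₂`: the canonical
homomorphism `F₁ ∗ F₂ → F` induced by the inclusions is bijective. -/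
def IsInternalFreeProduct [Group F] (F₁ F₂ : Subgroup F) : Prop :=
  Function.Bijective (Monoid.Coprod.lift F₁.subtype F₂.subtype)

/-!
If `g` depends on `H₁ ⊔ H₂`, it depends on every subgroup of `H₁ ⊔ H₂` containing a suitable
finitely generated `M₁ ⊔ M₂` with `Mᵢ ≤ Hᵢ`, since a single word in the kernel of `φ_g` involves
only finitely many elements. Let `K = ⟨M₁, M₂, g⟩`. Homomorphisms on `K ⊓ F₁` and `K ⊓ F₂` always
extend simultaneously to `K`. Extending the identity of `K ⊓ F₁` and the trivial homomorphism of
`K ⊓ F₂` shows `K ⊓ F₁ = ⟨M₁, g₁⟩` for some `g₁ ∈ F₁`. Either `g₁ ∈ H₁`, or `g₁` does not depend on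
`H₁` and hence `⟨M₁, g₁⟩` retracts onto `M₁`. In both cases `K ⊓ F₁` retracts onto a finitely
generated `N₁` between `M₁` and `H₁`, and likewise `K ⊓ F₂` onto some `N₂`. These retractions
extend to a retraction of `K = ⟨N₁ ⊔ N₂, g⟩` onto `N₁ ⊔ N₂`. But finitely generated free groups
are Hopfian, so a finitely generated retract `N` of `⟨N, g⟩` on which `g` depends contains `g`.
-/

section ResiduallyFinite

theorem exists_perm_eq_mul_left {G : Type*} [Group G] (P : Set G) [Finite P] (a : G) :
    ∃ σ : Equiv.Perm P, ∀ x y : P, a * x = y → σ x = y := by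
  obtain ⟨σ, hσ⟩ := Equiv.Perm.exists_extending_pair
    (fun x : {x : P // a * x ∈ P} => (x : P)) (fun x => ⟨a * x, x.2⟩)
    Subtype.val_injective fun x y h => by simpa [Subtype.ext_iff] using h
  exact ⟨σ, fun x y h => (hσ ⟨x, h ▸ y.2⟩).trans (Subtype.ext h)⟩

theorem lift_perm_mk_apply_one {α : Type*} {P : Set (FreeGroup α)} {σ : α → Equiv.Perm P}
    (hσ : ∀ a (x y : P), FreeGroup.of a * (x : FreeGroup α) = (y : FreeGroup α) → σ a x = y)
    (L : List (α × Bool)) (hL : ∀ s, s <:+ L → FreeGroup.mk s ∈ P) (x y : P)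
    (hx : (x : FreeGroup α) = 1) (hy : (y : FreeGroup α) = FreeGroup.mk L) :
    FreeGroup.lift σ (FreeGroup.mk L) x = y := by
  induction L generalizing y with
  | nil => simpa [← FreeGroup.one_eq_mk, Subtype.ext_iff, hx] using hy.symm
  | cons c L ih =>
    obtain ⟨a, b⟩ := c
    let z : P := ⟨FreeGroup.mk L, hL L (List.suffix_cons _ L)⟩
    have hz : FreeGroup.lift σ (FreeGroup.mk L) x = z :=
      ih (fun s hs => hL s (hs.trans (List.suffix_cons _ L))) z rfl
    have hmk : FreeGroup.mk ((a, b) :: L) = FreeGroup.mk [(a, b)] * FreeGroup.mk L :=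
      FreeGroup.mul_mk (L₁ := [(a, b)]) |>.symm
    rw [hmk] at hy ⊢
    rw [map_mul, Equiv.Perm.mul_apply, hz]
    cases b with
    | true => simpa using hσ a z y hy.symm
    | false =>
      have hinv : FreeGroup.mk [(a, false)] = (FreeGroup.of a)⁻¹ := rfl
      rw [hinv, map_inv, FreeGroup.lift_apply_of, Equiv.Perm.inv_eq_iff_eq]
      exact (hσ a y z (by rw [hy, hinv, mul_inv_cancel_left (FreeGroup.of a)])).symm

theorem exists_finite_hom_perm_ne_one {α : Type*} {w : FreeGroup α} (hw : w ≠ 1) :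
    ∃ (P : Set (FreeGroup α)) (_ : Finite P) (f : FreeGroup α →* Equiv.Perm P), f w ≠ 1 := by
  obtain ⟨L, rfl⟩ : ∃ L, FreeGroup.mk L = w := Quot.exists_rep w
  -- Left multiplication by a letter extends from a partial injection to a permutation of the
  -- suffixes of `L`; the resulting action of `L` moves `1` along the suffixes up to `L` itself.
  let P : Set (FreeGroup α) := FreeGroup.mk '' {s | s ∈ L.tails}
  have hP : ∀ s, s <:+ L → FreeGroup.mk s ∈ P := fun s hs => ⟨s, (List.mem_tails ..).2 hs, rfl⟩
  have : Finite P := ((List.finite_toSet L.tails).image _).to_subtype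
  choose σ hσ using fun a => exists_perm_eq_mul_left P (FreeGroup.of a)
  refine ⟨P, inferInstance, FreeGroup.lift σ, fun h => hw ?_⟩
  have h1 := lift_perm_mk_apply_one hσ L hP ⟨1, hP [] List.nil_suffix⟩
    ⟨FreeGroup.mk L, hP L List.suffix_rfl⟩ rfl rfl
  rw [h, Equiv.Perm.one_apply, Subtype.mk.injEq] at h1
  exact h1.symm

theorem residuallyFinite_of_isFreeGroup (G : Type*) [Group G] [IsFreeGroup G] :
    Group.ResiduallyFinite G := by
  refine Group.residuallyFinite_of_forall_exists_finite_monoidHom fun g hg => ?_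
  obtain ⟨P, hP, f, hf⟩ := exists_finite_hom_perm_ne_one
    (w := IsFreeGroup.toFreeGroup G g) (by simpa using hg)
  exact ⟨Equiv.Perm P, inferInstance, inferInstance,
    f.comp (IsFreeGroup.toFreeGroup G).toMonoidHom, hf⟩

end ResiduallyFinite

section Hopfian

theorem finite_monoidHom_of_fg (G M : Type*) [Group G] [Group.FG G] [Monoid M] [Finite M] :
    Finite (G →* M) := by
  obtain ⟨S, hS, hfin⟩ := Group.fg_iff.1 ‹Group.FG G›
  have := hfin.to_subtype
  exact .of_injective (fun (f : G →* M) (s : S) => f s) fun f f' h =>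
    MonoidHom.eq_of_eqOn_dense hS fun s hs => congrFun h ⟨s, hs⟩

-- Precomposition with `f` permutes the finitely many homomorphisms from `G` to a finite quotient,
-- so each quotient map factors through `f` and thus kills its kernel.
theorem injective_of_surjective_of_residuallyFinite {G : Type*} [Group G] [Group.FG G]
    [Group.ResiduallyFinite G] {f : G →* G} (hf : Function.Surjective f) :
    Function.Injective f := by
  refine (injective_iff_map_eq_one f).2 fun k hk =>
    Group.eq_one_iff_forall_finiteIndexNormalSubroup k fun N => ?_
  have := finite_monoidHom_of_fg G (G ⧸ N.toSubgroup)
  have hinj : Function.Injective fun ρ : G →* G ⧸ N.toSubgroup => ρ.comp f :=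
    fun _ _ h => (MonoidHom.cancel_right hf).1 h
  obtain ⟨ρ, hρ⟩ := Finite.surjective_of_injective hinj (QuotientGroup.mk' N.toSubgroup)
  refine (QuotientGroup.eq_one_iff k).1 ?_
  calc QuotientGroup.mk' N.toSubgroup k = ρ (f k) := by rw [← hρ, MonoidHom.comp_apply]
    _ = 1 := by rw [hk, map_one]

theorem injective_of_surjective_of_isFreeGroup {G : Type*} [Group G] [Group.FG G] [IsFreeGroup G]
    {f : G →* G} (hf : Function.Surjective f) : Function.Injective f :=
  have := residuallyFinite_of_isFreeGroup G
  injective_of_surjective_of_residuallyFinite hf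

end Hopfian

section Rank

variable {ι κ G G' : Type*} [Group G] [Group G']

/-- The free group on a disjoint union, as the free product of the free groups on the parts. -/
def freeGroupSumEquivCoprod (ι κ : Type*) :
    FreeGroup (ι ⊕ κ) ≃* (FreeGroup ι ∗ FreeGroup κ) :=
  MonoidHom.toMulEquiv
    (FreeGroup.lift (Sum.elim (fun i => Monoid.Coprod.inl (FreeGroup.of i))
      fun k => Monoid.Coprod.inr (FreeGroup.of k)))
    (Monoid.Coprod.lift (FreeGroup.map Sum.inl) (FreeGroup.map Sum.inr))
    (by ext (i | k) <;> simp)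
    (by ext <;> simp)

/-- The basis of a free product `G ∗ G'` formed by a basis of `G` and a basis of `G'`. -/
noncomputable def coprodBasis (b : FreeGroupBasis ι G) (b' : FreeGroupBasis κ G') :
    FreeGroupBasis (ι ⊕ κ) (G ∗ G') :=
  .ofRepr ((MulEquiv.coprodCongr b.repr b'.repr).trans (freeGroupSumEquivCoprod ι κ).symm)

instance isFreeGroup_coprod [IsFreeGroup G] [IsFreeGroup G'] : IsFreeGroup (G ∗ G') :=
  (coprodBasis (IsFreeGroup.basis G) (IsFreeGroup.basis G')).isFreeGroup

instance group_fg_coprod [Group.FG G] [Group.FG G'] : Group.FG (G ∗ G') := by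
  rw [Group.fg_def, ← Monoid.Coprod.range_inl_sup_range_inr]
  exact ((Group.fg_iff_subgroup_fg _).1 inferInstance).sup
    ((Group.fg_iff_subgroup_fg _).1 inferInstance)

theorem exists_surjective_of_basis_embedding (b : FreeGroupBasis ι G) (b' : FreeGroupBasis κ G')
    (j : κ ↪ ι) : ∃ f : G →* G', Function.Surjective f := by
  let f : G →* G' := b.lift (Function.extend j b' 1)
  let s : G' →* G := b'.lift (b ∘ j)
  have hfs : f.comp s = .id G' := b'.ext_hom _ _ fun k => by simp [f, s, j.injective.extend_apply]
  exact ⟨f, fun y => ⟨s y, DFunLike.congr_fun hfs y⟩⟩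

theorem nonempty_embedding_or_sum_unit_embedding (ι κ : Type*) :
    Nonempty (κ ↪ ι) ∨ Nonempty (ι ⊕ Unit ↪ κ) := by
  obtain hκ | ⟨⟨j⟩⟩ := Function.Embedding.total κ ι
  · exact .inl hκ
  by_cases hj : Function.Surjective j
  · exact .inl ⟨(Equiv.ofBijective j ⟨j.injective, hj⟩).symm.toEmbedding⟩
  · obtain ⟨k, hk⟩ := not_forall.1 hj
    exact .inr ⟨Sum.elim j fun _ => k, j.injective.sumElim (Function.injective_of_subsingleton _)
      fun i _ h => hk ⟨i, h⟩⟩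

-- The two cases are `rank G' ≤ rank G` and `rank G + 1 ≤ rank G'`.
theorem exists_surjective_or_exists_surjective_coprod (G G' : Type*) [Group G] [Group G']
    [IsFreeGroup G] [IsFreeGroup G'] :
    (∃ f : G →* G', Function.Surjective f) ∨
      ∃ f : G' →* (G ∗ FreeGroup Unit), Function.Surjective f := by
  let b := IsFreeGroup.basis G
  let b' := IsFreeGroup.basis G'
  rcases nonempty_embedding_or_sum_unit_embedding (IsFreeGroup.Generators G)
    (IsFreeGroup.Generators G') with ⟨⟨j⟩⟩ | ⟨⟨j⟩⟩
  · exact .inl (exists_surjective_of_basis_embedding b b' j)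
  · exact .inr (exists_surjective_of_basis_embedding b'
      (coprodBasis b (FreeGroupBasis.ofFreeGroup Unit)) j)

end Rank

section Cocycle

variable {A X G : Type*} [Group A] [MulAction A X] [Group G]

/-- `c : A → X → G` is a 1-cocycle of `A` with values in the group of functions `X → G`, on which
`A` acts by translation of the argument. -/
def IsOneCocycle (c : A → X → G) : Prop :=
  ∀ a b x, c (a * b) x = c a x * c b (a⁻¹ • x)

-- A section `s` of the orbit map turns `a` into the element `(s x)⁻¹ * a * s (a⁻¹ • x)` of the
-- stabilizer; off the orbit of `x₀` the cocycle is trivial.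
theorem exists_isOneCocycle_of_stabilizer (x₀ : X) (α : MulAction.stabilizer A x₀ →* G) :
    ∃ c : A → X → G, IsOneCocycle c ∧ ∀ k : MulAction.stabilizer A x₀, c k x₀ = α k := by
  classical
  obtain ⟨s, hs₁, hs⟩ : ∃ s : X → A, s x₀ = 1 ∧ ∀ x ∈ MulAction.orbit A x₀, s x • x₀ = x := by
    choose s₀ hs₀ using fun x (hx : x ∈ MulAction.orbit A x₀) => hx
    refine ⟨fun x => if x = x₀ then 1 else if hx : _ then s₀ x hx else 1, if_pos rfl,
      fun x hx => ?_⟩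
    by_cases h : x = x₀
    · simp [h]
    · simpa [h, hx] using hs₀ x hx
  have hmem : ∀ a x, x ∈ MulAction.orbit A x₀ →
      (s x)⁻¹ * a * s (a⁻¹ • x) ∈ MulAction.stabilizer A x₀ := fun a x hx => by
    rw [MulAction.mem_stabilizer_iff, mul_smul, mul_smul,
      hs _ ((MulAction.mem_orbit_of_mem_orbit a⁻¹) hx), smul_inv_smul, inv_smul_eq_iff, hs x hx]
  refine ⟨fun a x => if hx : x ∈ MulAction.orbit A x₀ then α ⟨_, hmem a x hx⟩ else 1,
    fun a b x => ?_, fun k => ?_⟩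
  · by_cases hx : x ∈ MulAction.orbit A x₀
    · have hax : a⁻¹ • x ∈ MulAction.orbit A x₀ := MulAction.mem_orbit_of_mem_orbit a⁻¹ hx
      simp only [dif_pos hx, dif_pos hax, ← map_mul]
      congr 1
      ext
      simp [mul_smul, mul_assoc]
    · have hax : a⁻¹ • x ∉ MulAction.orbit A x₀ := fun h =>
        hx (by simpa using MulAction.mem_orbit_of_mem_orbit a h)
      simp only [dif_neg hx, dif_neg hax, mul_one]
  · have hk : (k : A)⁻¹ • x₀ = x₀ := inv_smul_eq_iff.2 k.2.symm
    simp only [dif_pos (MulAction.mem_orbit_self x₀)]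
    congr 1
    ext
    simp [hk, hs₁]

namespace IsOneCocycle

/-- The restriction of a cocycle to the stabilizer of a point, evaluated at that point. -/
def stabilizerHom {c : A → X → G} (hc : IsOneCocycle c) (x₀ : X) :
    MulAction.stabilizer A x₀ →* G :=
  MonoidHom.mk' (fun k => c k x₀) fun k l => by
    rw [Subgroup.coe_mul, hc, inv_smul_eq_iff.2 k.2.symm]

/-- The homomorphism to the wreath product whose first component is a given cocycle of a subgroup
and whose second component is the inclusion of this subgroup. -/
def toSemidirectProduct {S : Subgroup A} {c : S → X → G} (hc : IsOneCocycle c) :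
    S →* (X → G) ⋊[mulAutArrow] A :=
  MonoidHom.mk' (fun a => ⟨c a, a⟩) fun a b =>
    SemidirectProduct.ext (funext fun x => hc a b x) rfl

end IsOneCocycle

end Cocycle

namespace IsInternalFreeProduct

variable [Group F] {F₁ F₂ : Subgroup F}

theorem symm (hF : IsInternalFreeProduct F₁ F₂) : IsInternalFreeProduct F₂ F₁ := by
  have h : ⇑(Monoid.Coprod.lift F₂.subtype F₁.subtype) =
      Monoid.Coprod.lift F₁.subtype F₂.subtype ∘ MulEquiv.coprodComm F₂ F₁ :=
    funext fun x => (Monoid.Coprod.lift_swap _ _ x).symm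
  rw [IsInternalFreeProduct, h]
  exact hF.comp (MulEquiv.bijective _)

theorem hom_ext (hF : IsInternalFreeProduct F₁ F₂) {M : Type*} [Monoid M] {f f' : F →* M}
    (h₁ : f.comp F₁.subtype = f'.comp F₁.subtype) (h₂ : f.comp F₂.subtype = f'.comp F₂.subtype) :
    f = f' := by
  refine (MonoidHom.cancel_right hF.surjective).1 ?_
  ext x
  · simpa using DFunLike.congr_fun h₁ x
  · simpa using DFunLike.congr_fun h₂ x

theorem exists_hom (hF : IsInternalFreeProduct F₁ F₂) {M : Type*} [Monoid M] (f₁ : F₁ →* M)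
    (f₂ : F₂ →* M) : ∃ f : F →* M, f.comp F₁.subtype = f₁ ∧ f.comp F₂.subtype = f₂ := by
  let e := MulEquiv.ofBijective _ hF
  have he₁ : ∀ x : F₁, e.symm x = Monoid.Coprod.inl x := fun x =>
    e.symm_apply_eq.2 (Monoid.Coprod.lift_apply_inl F₁.subtype F₂.subtype x).symm
  have he₂ : ∀ x : F₂, e.symm x = Monoid.Coprod.inr x := fun x =>
    e.symm_apply_eq.2 (Monoid.Coprod.lift_apply_inr F₁.subtype F₂.subtype x).symm
  refine ⟨(Monoid.Coprod.lift f₁ f₂).comp e.symm.toMonoidHom, ?_, ?_⟩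
  · ext x; simp [he₁]
  · ext x; simp [he₂]

theorem exists_isOneCocycle_extending (hF : IsInternalFreeProduct F₁ F₂) {X G : Type*}
    [MulAction F X] [Group G] {c₁ : F₁ → X → G} {c₂ : F₂ → X → G} (hc₁ : IsOneCocycle c₁)
    (hc₂ : IsOneCocycle c₂) :
    ∃ c : F → X → G, IsOneCocycle c ∧ (∀ a : F₁, c a = c₁ a) ∧ ∀ a : F₂, c a = c₂ a := by
  obtain ⟨w, hw₁, hw₂⟩ := hF.exists_hom hc₁.toSemidirectProduct hc₂.toSemidirectProduct
  have hright : SemidirectProduct.rightHom.comp w = MonoidHom.id F := by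
    refine hF.hom_ext ?_ ?_
    · rw [MonoidHom.comp_assoc, hw₁]; rfl
    · rw [MonoidHom.comp_assoc, hw₂]; rfl
  refine ⟨fun a => (w a).left, fun a b x => ?_,
    fun a => congrArg SemidirectProduct.left (DFunLike.congr_fun hw₁ a),
    fun a => congrArg SemidirectProduct.left (DFunLike.congr_fun hw₂ a)⟩
  have ha : (w a).right = a := DFunLike.congr_fun hright a
  simp only [map_mul, SemidirectProduct.mul_left, Pi.mul_apply, ha]
  rfl

theorem exists_hom_stabilizer_extending (hF : IsInternalFreeProduct F₁ F₂) {X G : Type*}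
    [MulAction F X] [Group G] (x₀ : X) (α₁ : MulAction.stabilizer F₁ x₀ →* G)
    (α₂ : MulAction.stabilizer F₂ x₀ →* G) :
    ∃ ψ : MulAction.stabilizer F x₀ →* G,
      (∀ a : MulAction.stabilizer F₁ x₀, ψ ⟨a, a.2⟩ = α₁ a) ∧
        ∀ a : MulAction.stabilizer F₂ x₀, ψ ⟨a, a.2⟩ = α₂ a := by
  obtain ⟨c₁, hc₁, hα₁⟩ := exists_isOneCocycle_of_stabilizer x₀ α₁
  obtain ⟨c₂, hc₂, hα₂⟩ := exists_isOneCocycle_of_stabilizer x₀ α₂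
  obtain ⟨c, hc, hcc₁, hcc₂⟩ := hF.exists_isOneCocycle_extending hc₁ hc₂
  exact ⟨hc.stabilizerHom x₀, fun a => (congrFun (hcc₁ a) x₀).trans (hα₁ a),
    fun a => (congrFun (hcc₂ a) x₀).trans (hα₂ a)⟩

theorem exists_hom_extending_inf (hF : IsInternalFreeProduct F₁ F₂) (K : Subgroup F) {G : Type*}
    [Group G] (α₁ : ↥(K ⊓ F₁) →* G) (α₂ : ↥(K ⊓ F₂) →* G) :
    ∃ ψ : K →* G, ψ.comp (Subgroup.inclusion inf_le_left) = α₁ ∧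
      ψ.comp (Subgroup.inclusion inf_le_left) = α₂ := by
  -- `K` is the stabilizer of a point, so both homomorphisms extend to cocycles, which glue.
  have hK : MulAction.stabilizer F ((1 : F) : F ⧸ K) = K := MulAction.stabilizer_quotient K
  let ι (S : Subgroup F) : MulAction.stabilizer S ((1 : F) : F ⧸ K) →* ↥(K ⊓ S) :=
    (S.subtype.comp (Subgroup.subtype _)).codRestrict _ fun a => ⟨hK.le a.2, a.1.2⟩
  obtain ⟨ψ, hψ₁, hψ₂⟩ := hF.exists_hom_stabilizer_extending ((1 : F) : F ⧸ K) (α₁.comp (ι F₁))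
    (α₂.comp (ι F₂))
  exact ⟨ψ.comp (Subgroup.inclusion hK.ge),
    MonoidHom.ext fun k => hψ₁ ⟨⟨k, k.2.2⟩, hK.ge k.2.1⟩,
    MonoidHom.ext fun k => hψ₂ ⟨⟨k, k.2.2⟩, hK.ge k.2.1⟩⟩

end IsInternalFreeProduct

section Dependence

variable [Group F] {H M : Subgroup F} {g : F}

theorem range_phi (H : Subgroup F) (g : F) : (phi H g).range = H ⊔ Subgroup.zpowers g := by
  rw [phi, Monoid.Coprod.range_lift, FreeGroup.range_lift_eq_closure, Subgroup.range_subtype,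
    Set.range_const, Subgroup.zpowers_eq_closure]

theorem phi_comp_map_inclusion (hM : M ≤ H) (g : F) :
    (phi H g).comp (Monoid.Coprod.map (Subgroup.inclusion hM) (.id _)) = phi M g := by
  ext <;> simp [phi]

theorem depends_of_mem (hg : g ∈ H) : Depends H g := by
  intro hinj
  have h : (Monoid.Coprod.inr (FreeGroup.of ()) : ↥H ∗ FreeGroup Unit) =
      Monoid.Coprod.inl ⟨g, hg⟩ := hinj (by simp [phi])
  have h1 := congrArg Monoid.Coprod.snd h
  simp at h1

theorem depSubgroup_eq_self_iff : DepSubgroup H = H ↔ ∀ g, Depends H g → g ∈ H :=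
  ⟨fun h _ hg => h ▸ Subgroup.subset_closure hg, fun h =>
    le_antisymm ((Subgroup.closure_le _).2 h) fun _ hg =>
      Subgroup.subset_closure (depends_of_mem hg)⟩

theorem fg_zpowers (g : F) : (Subgroup.zpowers g).FG :=
  ⟨{g}, by simp [Subgroup.zpowers_eq_closure]⟩

theorem exists_fg_forall_mem_range_map_inclusion {B : Type*} [Group B] (w : ↥H ∗ B) :
    ∃ M ≤ H, M.FG ∧ ∀ N (hN : N ≤ H), M ≤ N →
      w ∈ (Monoid.Coprod.map (Subgroup.inclusion hN) (.id B)).range := by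
  induction w using Monoid.Coprod.induction_on with
  | inl h =>
    refine ⟨Subgroup.zpowers (h : F), Subgroup.zpowers_le.2 h.2, fg_zpowers _,
      fun N hN hM => ⟨Monoid.Coprod.inl ⟨h, Subgroup.zpowers_le.1 hM⟩, ?_⟩⟩
    simp [Subgroup.inclusion]
  | inr b =>
    exact ⟨⊥, bot_le, .bot, fun N hN _ => ⟨Monoid.Coprod.inr b, by simp⟩⟩
  | mul x y hx hy =>
    obtain ⟨M, hMH, hM, hMx⟩ := hx
    obtain ⟨M', hMH', hM', hMy⟩ := hy
    exact ⟨M ⊔ M', sup_le hMH hMH', hM.sup hM', fun N hN hMN =>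
      mul_mem (hMx N hN (le_sup_left.trans hMN)) (hMy N hN (le_sup_right.trans hMN))⟩

theorem Depends.exists_fg (hg : Depends H g) :
    ∃ M ≤ H, M.FG ∧ ∀ N, M ≤ N → N ≤ H → Depends N g := by
  rw [Depends, injective_iff_map_eq_one] at hg
  push Not at hg
  obtain ⟨w, hw, hw1⟩ := hg
  obtain ⟨M, hMH, hM, hMw⟩ := exists_fg_forall_mem_range_map_inclusion w
  refine ⟨M, hMH, hM, fun N hMN hN hinj => hw1 ?_⟩
  obtain ⟨v, rfl⟩ := hMw N hN hMN
  have hv : phi N g v = 1 := by rw [← phi_comp_map_inclusion hN, MonoidHom.comp_apply, hw]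
  rw [(injective_iff_map_eq_one _).1 hinj v hv, map_one]

theorem exists_fg_mem_sup {H₁ H₂ : Subgroup F} {x : F} (hx : x ∈ H₁ ⊔ H₂) :
    ∃ M₁ ≤ H₁, ∃ M₂ ≤ H₂, M₁.FG ∧ M₂.FG ∧ x ∈ M₁ ⊔ M₂ := by
  rw [← H₁.closure_eq, ← H₂.closure_eq, ← Subgroup.closure_union] at hx
  induction hx using Subgroup.closure_induction with
  | mem x hx =>
    rcases hx with hx | hx
    · exact ⟨_, Subgroup.zpowers_le.2 hx, ⊥, bot_le, fg_zpowers x, .bot, by simp⟩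
    · exact ⟨⊥, bot_le, _, Subgroup.zpowers_le.2 hx, .bot, fg_zpowers x, by simp⟩
  | one => exact ⟨⊥, bot_le, ⊥, bot_le, .bot, .bot, one_mem _⟩
  | inv x _ ih => simpa using ih
  | mul x y _ _ hx hy =>
    obtain ⟨M₁, h₁, M₂, h₂, hM₁, hM₂, hM⟩ := hx
    obtain ⟨N₁, k₁, N₂, k₂, hN₁, hN₂, hN⟩ := hy
    refine ⟨M₁ ⊔ N₁, sup_le h₁ k₁, M₂ ⊔ N₂, sup_le h₂ k₂, hM₁.sup hN₁, hM₂.sup hN₂, ?_⟩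
    rw [sup_sup_sup_comm]
    exact mul_mem (Subgroup.mem_sup_left hM) (Subgroup.mem_sup_right hN)

theorem exists_fg_le_sup {H₁ H₂ : Subgroup F} (hM : M.FG) (hle : M ≤ H₁ ⊔ H₂) :
    ∃ M₁ ≤ H₁, ∃ M₂ ≤ H₂, M₁.FG ∧ M₂.FG ∧ M ≤ M₁ ⊔ M₂ := by
  obtain ⟨S, rfl, hS⟩ := (Subgroup.fg_iff M).1 hM
  induction S, hS using Set.Finite.induction_on with
  | empty => exact ⟨⊥, bot_le, ⊥, bot_le, .bot, .bot, by simp⟩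
  | @insert x S _ hS ih =>
    rw [Subgroup.closure_le, Set.insert_subset_iff, ← Subgroup.closure_le] at hle
    obtain ⟨M₁, h₁, M₂, h₂, hM₁, hM₂, hM⟩ := ih ((Subgroup.fg_iff _).2 ⟨S, rfl, hS⟩) hle.2
    obtain ⟨N₁, k₁, N₂, k₂, hN₁, hN₂, hN⟩ := exists_fg_mem_sup hle.1
    refine ⟨M₁ ⊔ N₁, sup_le h₁ k₁, M₂ ⊔ N₂, sup_le h₂ k₂, hM₁.sup hN₁, hM₂.sup hN₂, ?_⟩
    rw [Subgroup.closure_le, Set.insert_subset_iff, ← Subgroup.closure_le, sup_sup_sup_comm]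
    exact ⟨Subgroup.mem_sup_right hN, hM.trans le_sup_left⟩

end Dependence

section Retract

variable [Group F] {H K M : Subgroup F} {g : F}

/-- `H` is a retract of `K`: some homomorphism `K → H` restricts to the identity on `H`. -/
def IsRetract (H K : Subgroup F) : Prop :=
  ∃ (h : H ≤ K) (r : K →* H), r.comp (Subgroup.inclusion h) = .id H

theorem IsRetract.le (h : IsRetract H K) : H ≤ K :=
  h.1

theorem IsRetract.refl (H : Subgroup F) : IsRetract H H :=
  ⟨le_rfl, .id H, rfl⟩

theorem isRetract_sup_zpowers_of_injective (hM : M ≤ H) (hg : Function.Injective (phi H g)) :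
    IsRetract M (M ⊔ Subgroup.zpowers g) := by
  rw [← range_phi]
  have hker : (phi M g).rangeRestrict.ker ≤
      (Monoid.Coprod.fst : ↥M ∗ FreeGroup Unit →* M).ker := fun w hw => by
    rw [MonoidHom.ker_rangeRestrict, MonoidHom.mem_ker, ← phi_comp_map_inclusion hM] at hw
    have hcomm : Monoid.Coprod.fst.comp (Monoid.Coprod.map (Subgroup.inclusion hM) (.id _)) =
        (Subgroup.inclusion hM).comp (Monoid.Coprod.fst : ↥M ∗ FreeGroup Unit →* M) := by
      ext <;> simp
    refine (injective_iff_map_eq_one _).1 (Subgroup.inclusion_injective hM) _ ?_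
    rw [← MonoidHom.comp_apply, ← hcomm, MonoidHom.comp_apply,
      (injective_iff_map_eq_one _).1 hg _ hw, map_one]
  refine ⟨le_sup_left.trans (range_phi M g).ge,
    MonoidHom.liftOfSurjective _ (phi M g).rangeRestrict_surjective ⟨_, hker⟩, ?_⟩
  ext m
  have hm : Subgroup.inclusion (le_sup_left.trans (range_phi M g).ge) m =
      (phi M g).rangeRestrict (Monoid.Coprod.inl m) :=
    Subtype.ext (Monoid.Coprod.lift_apply_inl M.subtype _ m).symm
  simp [hm]

theorem IsRetract.mem_of_depends [IsFreeGroup F] (hH : H.FG)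
    (hr : IsRetract H (H ⊔ Subgroup.zpowers g)) (hg : Depends H g) : g ∈ H := by
  have := (Group.fg_iff_subgroup_fg H).2 hH
  rw [← range_phi] at hr
  obtain ⟨hle, r, hr⟩ := hr
  have hr' : Function.LeftInverse r (Subgroup.inclusion hle) := DFunLike.congr_fun hr
  rcases exists_surjective_or_exists_surjective_coprod H (phi H g).range with ⟨f, hf⟩ | ⟨f, hf⟩
  · have hrf : Function.Injective (r.comp f) :=
      injective_of_surjective_of_isFreeGroup (hr'.surjective.comp hf)
    have hrinj : Function.Injective r := Function.Injective.of_comp_right hrf hf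
    let k : (phi H g).range :=
      ⟨g, (range_phi H g).ge (Subgroup.mem_sup_right (Subgroup.mem_zpowers g))⟩
    have hk : (r k : F) = g := congrArg Subtype.val (hrinj (hr' (r k)) : _ = k)
    exact hk ▸ (r k).2
  · have hinj : Function.Injective (f.comp (phi H g).rangeRestrict) :=
      injective_of_surjective_of_isFreeGroup (hf.comp (phi H g).rangeRestrict_surjective)
    exact absurd (MonoidHom.rangeRestrict_injective_iff.1 (.of_comp hinj)) hg

end Retract

namespace IsInternalFreeProduct

variable [Group F] {F₁ F₂ K M₁ M₂ N₁ N₂ : Subgroup F} {g : F}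

theorem exists_inf_eq_sup_zpowers (hF : IsInternalFreeProduct F₁ F₂) (h₁ : M₁ ≤ F₁)
    (h₂ : M₂ ≤ F₂) (hK : K = M₁ ⊔ M₂ ⊔ Subgroup.zpowers g) :
    ∃ g₁ ∈ F₁, K ⊓ F₁ = M₁ ⊔ Subgroup.zpowers g₁ := by
  have hM₁K : M₁ ≤ K := hK ▸ le_sup_left.trans le_sup_left
  have hM₂K : M₂ ≤ K := hK ▸ le_sup_right.trans le_sup_left
  have hgK : g ∈ K := hK ▸ Subgroup.mem_sup_right (Subgroup.mem_zpowers g)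
  obtain ⟨ρ, hρ₁, hρ₂⟩ := hF.exists_hom_extending_inf K (.id ↥(K ⊓ F₁)) 1
  let g₁ := ρ ⟨g, hgK⟩
  let L := (M₁ ⊔ Subgroup.zpowers (g₁ : F)).comap ((K ⊓ F₁).subtype.comp ρ)
  have hρ₁' (x : F) (hx : x ∈ K ⊓ F₁) : (ρ ⟨x, hx.1⟩ : F) = x :=
    congrArg Subtype.val (DFunLike.congr_fun hρ₁ ⟨x, hx⟩)
  have hL : K ≤ L.map K.subtype := by
    conv_lhs => rw [hK]
    refine sup_le (sup_le (fun x hx => ?_) fun x hx => ?_) (Subgroup.zpowers_le.2 ?_)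
    · refine ⟨⟨x, hM₁K hx⟩, Subgroup.mem_sup_left ?_, rfl⟩
      simpa [hρ₁' x ⟨hM₁K hx, h₁ hx⟩] using hx
    · refine ⟨⟨x, hM₂K hx⟩, ?_, rfl⟩
      have hx1 : ρ ⟨x, hM₂K hx⟩ = 1 := DFunLike.congr_fun hρ₂ ⟨x, hM₂K hx, h₂ hx⟩
      simp [L, hx1]
    · exact ⟨⟨g, hgK⟩, Subgroup.mem_sup_right (Subgroup.mem_zpowers _), rfl⟩
  refine ⟨g₁, g₁.2.2, le_antisymm (fun x hx => ?_)
    (sup_le (le_inf hM₁K h₁) (Subgroup.zpowers_le.2 g₁.2))⟩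
  obtain ⟨y, hy, rfl⟩ := hL hx.1
  exact hρ₁' _ hx ▸ hy

theorem isRetract_sup (hF : IsInternalFreeProduct F₁ F₂) (h₁ : IsRetract N₁ (K ⊓ F₁))
    (h₂ : IsRetract N₂ (K ⊓ F₂)) : IsRetract (N₁ ⊔ N₂) K := by
  obtain ⟨hN₁, r₁, hr₁⟩ := h₁
  obtain ⟨hN₂, r₂, hr₂⟩ := h₂
  have hle : N₁ ⊔ N₂ ≤ K := sup_le (hN₁.trans inf_le_left) (hN₂.trans inf_le_left)
  obtain ⟨ψ, hψ₁, hψ₂⟩ := hF.exists_hom_extending_inf K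
    ((Subgroup.inclusion le_sup_left).comp r₁ : _ →* ↥(N₁ ⊔ N₂))
    ((Subgroup.inclusion le_sup_right).comp r₂)
  let L := ((N₁ ⊔ N₂).subtype.comp ψ).eqLocus K.subtype
  have hL : N₁ ⊔ N₂ ≤ L.map K.subtype := by
    refine sup_le (fun x hx => ⟨⟨x, (hN₁ hx).1⟩, ?_, rfl⟩) fun x hx => ⟨⟨x, (hN₂ hx).1⟩, ?_, rfl⟩
    · exact (congrArg Subtype.val (DFunLike.congr_fun hψ₁ ⟨x, hN₁ hx⟩)).trans
        (congrArg (fun n : N₁ => (n : F)) (DFunLike.congr_fun hr₁ ⟨x, hx⟩))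
    · exact (congrArg Subtype.val (DFunLike.congr_fun hψ₂ ⟨x, hN₂ hx⟩)).trans
        (congrArg (fun n : N₂ => (n : F)) (DFunLike.congr_fun hr₂ ⟨x, hx⟩))
  refine ⟨hle, ψ, MonoidHom.ext fun x => Subtype.ext ?_⟩
  obtain ⟨y, hy, hyx⟩ := hL x.2
  have hxy : Subgroup.inclusion hle x = y := Subtype.ext hyx.symm
  rw [MonoidHom.comp_apply, hxy]
  exact hy.trans hyx

theorem exists_fg_isRetract_inf (hF : IsInternalFreeProduct F₁ F₂) {H₁ : Subgroup F}
    (hle₁ : H₁ ≤ F₁) (hc : ∀ g ∈ F₁, Depends H₁ g → g ∈ H₁) (hM₁ : M₁.FG) (hM₁H : M₁ ≤ H₁)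
    (hM₂ : M₂ ≤ F₂) (hK : K = M₁ ⊔ M₂ ⊔ Subgroup.zpowers g) :
    ∃ N₁ ≤ H₁, M₁ ≤ N₁ ∧ N₁.FG ∧ IsRetract N₁ (K ⊓ F₁) := by
  obtain ⟨g₁, hg₁, hKF⟩ := hF.exists_inf_eq_sup_zpowers (hM₁H.trans hle₁) hM₂ hK
  by_cases hg₁H : g₁ ∈ H₁
  · refine ⟨K ⊓ F₁, ?_, ?_, ?_, .refl _⟩ <;> rw [hKF]
    · exact sup_le hM₁H (Subgroup.zpowers_le.2 hg₁H)
    · exact le_sup_left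
    · exact hM₁.sup (fg_zpowers g₁)
  · have hinj : Function.Injective (phi H₁ g₁) := not_not.1 fun h => hg₁H (hc g₁ hg₁ h)
    exact ⟨M₁, hM₁H, le_rfl, hM₁, hKF ▸ isRetract_sup_zpowers_of_injective hM₁H hinj⟩

theorem mem_sup_of_depends [IsFreeGroup F] (hF : IsInternalFreeProduct F₁ F₂)
    {H₁ H₂ : Subgroup F} (hle₁ : H₁ ≤ F₁) (hle₂ : H₂ ≤ F₂)
    (hc₁ : ∀ g ∈ F₁, Depends H₁ g → g ∈ H₁) (hc₂ : ∀ g ∈ F₂, Depends H₂ g → g ∈ H₂)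
    (hg : Depends (H₁ ⊔ H₂) g) : g ∈ H₁ ⊔ H₂ := by
  obtain ⟨M, hMH, hM, hdep⟩ := hg.exists_fg
  obtain ⟨M₁, hM₁H, M₂, hM₂H, hM₁, hM₂, hMM⟩ := exists_fg_le_sup hM hMH
  obtain ⟨K, hK⟩ : ∃ K, K = M₁ ⊔ M₂ ⊔ Subgroup.zpowers g := ⟨_, rfl⟩
  obtain ⟨N₁, hN₁H, hMN₁, hN₁, hr₁⟩ :=
    hF.exists_fg_isRetract_inf hle₁ hc₁ hM₁ hM₁H (hM₂H.trans hle₂) hK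
  obtain ⟨N₂, hN₂H, hMN₂, hN₂, hr₂⟩ :=
    hF.symm.exists_fg_isRetract_inf hle₂ hc₂ hM₂ hM₂H (hM₁H.trans hle₁)
      (hK.trans (by rw [sup_comm M₁]))
  have hr : IsRetract (N₁ ⊔ N₂) K := hF.isRetract_sup hr₁ hr₂
  have hNM : M₁ ⊔ M₂ ≤ N₁ ⊔ N₂ := sup_le_sup hMN₁ hMN₂
  have hNH : N₁ ⊔ N₂ ≤ H₁ ⊔ H₂ := sup_le_sup hN₁H hN₂H
  have hKN : K = N₁ ⊔ N₂ ⊔ Subgroup.zpowers g :=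
    le_antisymm (hK.le.trans (sup_le_sup_right hNM _))
      (sup_le hr.le (hK ▸ le_sup_right))
  exact hNH ((hKN ▸ hr).mem_of_depends (hN₁.sup hN₂) (hdep _ (hMM.trans hNM) hNH))

end IsInternalFreeProduct

theorem depClosed_free_product_general [Group F] [IsFreeGroup F] (F₁ F₂ : Subgroup F)
    (hF : IsInternalFreeProduct F₁ F₂)
    (H₁ H₂ : Subgroup F) (hle₁ : H₁ ≤ F₁) (hle₂ : H₂ ≤ F₂)
    (hc₁ : Subgroup.closure {g : F | g ∈ F₁ ∧ Depends H₁ g} = H₁)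
    (hc₂ : Subgroup.closure {g : F | g ∈ F₂ ∧ Depends H₂ g} = H₂) :
    DepSubgroup (H₁ ⊔ H₂) = H₁ ⊔ H₂ :=
  depSubgroup_eq_self_iff.2 fun _ =>
    hF.mem_sup_of_depends hle₁ hle₂ (fun _ hg hd => hc₁.le (Subgroup.subset_closure ⟨hg, hd⟩))
      fun _ hg hd => hc₂.le (Subgroup.subset_closure ⟨hg, hd⟩)

/-- if `F = F₁ ∗ F₂` and `H₁ ≤ F₁`, `H₂ ≤ F₂` are finitely generated and
dependence-closed in `F₁` resp. `F₂`, then `H₁ ∗ H₂ = ⟨H₁, H₂⟩` is dependence-closed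
in `F`. -/
theorem depClosed_free_product [Group F] [IsFreeGroup F] (F₁ F₂ : Subgroup F)
    (hF : IsInternalFreeProduct F₁ F₂)
    (H₁ H₂ : Subgroup F) (hle₁ : H₁ ≤ F₁) (hle₂ : H₂ ≤ F₂)
    (hfg₁ : H₁.FG) (hfg₂ : H₂.FG)
    (hc₁ : Subgroup.closure {g : F | g ∈ F₁ ∧ Depends H₁ g} = H₁)
    (hc₂ : Subgroup.closure {g : F | g ∈ F₂ ∧ Depends H₂ g} = H₂) :
    DepSubgroup (H₁ ⊔ H₂) = H₁ ⊔ H₂ :=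
  depClosed_free_product_general F₁ F₂ hF H₁ H₂ hle₁ hle₂ hc₁ hc₂
end

section
/- Let H be a finitely generated subgroup of a free group F. Then there exists an integer n such that every g ∈ F that depends on H satisfies a nontrivial equation over H of degree at most n; that is, for every g ∈ dep(H) there exists w ∈ ker φ_g with w ≠ 1 and deg(w) ≤ n. -/
open scoped Monoid.Coprod

variable {F : Type*}

/-- The degree of an equation `w ∈ H ∗ ⟨x⟩`: writing
`w = h₁ x^{i₁} h₂ x^{i₂} ⋯ h_m x^{i_m} h_{m+1}`, the degree is `Σ |i_j|`; here it is
defined as the minimum of `Σ |i_j|` over all such representations, which is attained at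
the reduced normal form. -/
noncomputable def eqnDegree [Group F] {H : Subgroup F} (w : ↥H ∗ FreeGroup Unit) : ℕ :=
  sInf {n | ∃ l : List (↥H × ℤ), ∃ h : ↥H,
    (l.map fun p => Monoid.Coprod.inl p.1 *
        Monoid.Coprod.inr (FreeGroup.of () ^ p.2)).prod * Monoid.Coprod.inl h = w ∧
    (l.map fun p => p.2.natAbs).sum = n}

/-!
In the Cayley tree of a free group let `T` be the subtree spanned by `H`. If `g • T` and `T` are
disjoint, then the shortest path joining them leads, at each of its ends, into a branch of the tree.
After multiplying `g` by an element of `H` if necessary, `H` and `⟨g⟩` play ping-pong with these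
branches, so `φ_g` is injective. Hence every `g` depending on `H` lies in `T * T⁻¹`.

When `H` is finitely generated, `T` meets only finitely many `H`-orbits, so the elements depending
on `H` lie in finitely many double cosets `H d H`. For `a b : H`, the substitution `x ↦ a x b` is an
automorphism of `H ∗ ⟨x⟩` that preserves degrees and turns equations satisfied by `a * d * b` into
equations satisfied by `d`, so one equation for each double coset bounds the degree.
-/

section PingPong

open Cardinal
open scoped Pointwise

variable {A B G X : Type*} [Group A] [Group B] [Group G] [MulAction G X]

/-- The free product of a pair of monoids, indexed by `Bool`, as the binary free product. -/
def coprodEquivCoprodI (M : Bool → Type*) [∀ b, Monoid (M b)] :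
    M true ∗ M false ≃* Monoid.CoprodI M :=
  MonoidHom.toMulEquiv (Monoid.Coprod.lift Monoid.CoprodI.of Monoid.CoprodI.of)
    (Monoid.CoprodI.lift fun
      | true => Monoid.Coprod.inl
      | false => Monoid.Coprod.inr)
    (by ext <;> simp) (by ext (_ | _) <;> simp)

theorem injective_of_smul_subset (f : A →* G) {U V : Set X} (hV : V.Nonempty)
    (hUV : Disjoint U V) (hf : ∀ a ≠ 1, f a • V ⊆ U) : Function.Injective f := by
  refine (injective_iff_map_eq_one f).2 fun a ha => by_contra fun ha1 => ?_
  obtain ⟨v, hv⟩ := hV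
  have hVU : V ⊆ U := by simpa [ha] using hf a ha1
  exact Set.disjoint_left.1 hUV (hVU hv) hv

theorem coprodLift_injective_of_ping_pong (f : A →* G) (f' : B →* G)
    (hcard : 3 ≤ #A ∨ 3 ≤ #B) {U V : Set X} (hU : U.Nonempty) (hV : V.Nonempty)
    (hUV : Disjoint U V) (hf : ∀ a ≠ 1, f a • V ⊆ U) (hf' : ∀ b ≠ 1, f' b • U ⊆ V) :
    Function.Injective (Monoid.Coprod.lift f f') := by
  have hfinj := injective_of_smul_subset f hV hUV hf
  have hfinj' := injective_of_smul_subset f' hU hUV.symm hf'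
  let K : Bool → Subgroup G := (cond · f.range f'.range)
  let e := (MulEquiv.coprodCongr (MonoidHom.ofInjective hfinj) (MonoidHom.ofInjective hfinj')).trans
    (coprodEquivCoprodI fun b => K b)
  have hlift : Monoid.Coprod.lift f f' =
      (Monoid.CoprodI.lift fun b => (K b).subtype).comp e.toMonoidHom := by
    ext <;> simp [e, K, coprodEquivCoprodI] <;> rfl
  rw [hlift, MonoidHom.coe_comp]
  refine .comp ?_ e.injective
  refine Monoid.CoprodI.lift_injective_of_ping_pong _ (.inr ?_) (cond · U V) ?_ ?_ ?_
  · have hrange := lift_mk_eq'.2 ⟨(MonoidHom.ofInjective hfinj).toEquiv⟩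
    have hrange' := lift_mk_eq'.2 ⟨(MonoidHom.ofInjective hfinj').toEquiv⟩
    obtain h | h := hcard
    · rw [← ofNat_le_lift_iff, hrange, ofNat_le_lift_iff] at h
      exact ⟨true, h⟩
    · rw [← ofNat_le_lift_iff, hrange', ofNat_le_lift_iff] at h
      exact ⟨false, h⟩
  · rintro (_ | _) <;> assumption
  · rintro (_ | _) (_ | _) hij
    exacts [absurd rfl hij, hUV.symm, hUV, absurd rfl hij]
  · rintro (_ | _) (_ | _) hij ⟨_, x, rfl⟩ hx
    · exact absurd rfl hij
    · exact hf' x (by rintro rfl; simp at hx)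
    · exact hf x (by rintro rfl; simp at hx)
    · exact absurd rfl hij

end PingPong

section Equations

variable {F' : Type*} [Group F] [Group F'] {H : Subgroup F} {a b : H} {g : F} {n : ℕ}

theorem exists_of_zpow_eq (z : FreeGroup Unit) : ∃ n : ℤ, FreeGroup.of () ^ n = z :=
  FreeGroup.freeGroupUnitEquivInt.symm.surjective z

theorem phi_map_comp (e : F ≃* F') (H : Subgroup F) (g : F) :
    (phi (H.map (e : F →* F')) (e g)).comp
      (MulEquiv.coprodCongr (e.subgroupMap H) (.refl (FreeGroup Unit))).toMonoidHom =
      (e : F →* F').comp (phi H g) := by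
  ext <;> simp [phi]

theorem Depends.map (e : F ≃* F') (h : Depends H g) :
    Depends (H.map (e : F →* F')) (e g) := by
  refine fun hinj => h (.of_comp (f := e) ?_)
  have hcomp := congrArg DFunLike.coe (phi_map_comp e H g)
  simp only [MonoidHom.coe_comp] at hcomp
  exact hcomp ▸ hinj.comp (MulEquiv.injective _)

/-- The element `h₁ x^{i₁} ⋯ h_m x^{i_m} h` of `H ∗ ⟨x⟩` written by the list of the pairs
`(h_j, i_j)` and the last coefficient `h`. -/
def eqnOfList (l : List (H × ℤ)) (h : H) : H ∗ FreeGroup Unit :=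
  (l.map fun p => Monoid.Coprod.inl p.1 *
    Monoid.Coprod.inr (FreeGroup.of () ^ p.2)).prod * Monoid.Coprod.inl h

theorem eqnOfList_append (l l' : List (H × ℤ)) (h h' : H) :
    eqnOfList (l ++ (h, 0) :: l') h' = eqnOfList l h * eqnOfList l' h' := by
  simp [eqnOfList, mul_assoc]

theorem eqnOfList_surjective (w : H ∗ FreeGroup Unit) : ∃ l h, eqnOfList l h = w := by
  induction w using Monoid.Coprod.induction_on with
  | inl h => exact ⟨[], h, by simp [eqnOfList]⟩
  | inr z =>
    obtain ⟨n, rfl⟩ := exists_of_zpow_eq z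
    exact ⟨[(1, n)], 1, by simp [eqnOfList]⟩
  | mul u v hu hv =>
    obtain ⟨l, h, rfl⟩ := hu
    obtain ⟨l', h', rfl⟩ := hv
    exact ⟨_, _, eqnOfList_append l l' h h'⟩

theorem eqnDegree_eqnOfList_le (l : List (H × ℤ)) (h : H) :
    eqnDegree (eqnOfList l h) ≤ (l.map fun p => p.2.natAbs).sum :=
  Nat.sInf_le ⟨l, h, rfl, rfl⟩

theorem exists_eqnOfList_eq_sum_eq_eqnDegree (w : H ∗ FreeGroup Unit) :
    ∃ l h, eqnOfList l h = w ∧ (l.map fun p => p.2.natAbs).sum = eqnDegree w := by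
  obtain ⟨l, h, hw⟩ := eqnOfList_surjective w
  exact Nat.sInf_mem (s := {n | ∃ l h, eqnOfList l h = w ∧ (l.map fun p => p.2.natAbs).sum = n})
    ⟨_, l, h, hw, rfl⟩

theorem eqnDegree_mul_le (u v : H ∗ FreeGroup Unit) :
    eqnDegree (u * v) ≤ eqnDegree u + eqnDegree v := by
  obtain ⟨l, h, rfl, hu⟩ := exists_eqnOfList_eq_sum_eq_eqnDegree u
  obtain ⟨l', h', rfl, hv⟩ := exists_eqnOfList_eq_sum_eq_eqnDegree v
  rw [← hu, ← hv, ← eqnOfList_append]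
  simpa using eqnDegree_eqnOfList_le (l ++ (h, 0) :: l') h'

theorem eqnDegree_inl (h : H) :
    eqnDegree (Monoid.Coprod.inl h : H ∗ FreeGroup Unit) = 0 := by
  simpa [eqnOfList] using eqnDegree_eqnOfList_le [] h

theorem eqnDegree_inl_mul_inr_mul_inl_le (a b : H) (i : ℤ) :
    eqnDegree (Monoid.Coprod.inl a * Monoid.Coprod.inr (FreeGroup.of () ^ i) *
      Monoid.Coprod.inl b) ≤ i.natAbs := by
  simpa [eqnOfList] using eqnDegree_eqnOfList_le [(a, i)] b

theorem le_eqnDegree_of_subadditive {ℓ : H ∗ FreeGroup Unit → ℕ}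
    (hmul : ∀ u v, ℓ (u * v) ≤ ℓ u + ℓ v) (hinl : ∀ h, ℓ (Monoid.Coprod.inl h) = 0)
    (hx : ℓ (Monoid.Coprod.inr (FreeGroup.of ())) ≤ 1)
    (hx' : ℓ (Monoid.Coprod.inr (FreeGroup.of ()))⁻¹ ≤ 1) (w : H ∗ FreeGroup Unit) :
    ℓ w ≤ eqnDegree w := by
  have hone : ℓ 1 = 0 := by simpa using hinl 1
  have hpow (u : H ∗ FreeGroup Unit) (hu : ℓ u ≤ 1) (m : ℕ) : ℓ (u ^ m) ≤ m := by
    induction m with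
    | zero => simp [hone]
    | succ m ih => exact pow_succ u m ▸ (hmul _ _).trans (add_le_add ih hu)
  have hzpow (i : ℤ) : ℓ (Monoid.Coprod.inr (FreeGroup.of () ^ i)) ≤ i.natAbs := by
    obtain ⟨m, rfl | rfl⟩ := i.eq_nat_or_neg
    · simpa using hpow _ hx m
    · simpa using hpow _ hx' m
  obtain ⟨l, h, rfl, hl⟩ := exists_eqnOfList_eq_sum_eq_eqnDegree w
  rw [← hl, eqnOfList]
  refine (hmul _ _).trans ?_
  rw [hinl, add_zero]
  clear hl
  induction l with
  | nil => simp [hone]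
  | cons p l ih =>
    simp only [List.map_cons, List.prod_cons, List.sum_cons]
    refine (hmul _ _).trans (add_le_add ((hmul _ _).trans ?_) ih)
    simpa [hinl] using hzpow p.2

/-- The substitution `x ↦ a x b` in equations over `H`. -/
def eqnSubst (a b : H) : (H ∗ FreeGroup Unit) →* (H ∗ FreeGroup Unit) :=
  Monoid.Coprod.lift Monoid.Coprod.inl (FreeGroup.lift fun _ =>
    Monoid.Coprod.inl a * Monoid.Coprod.inr (FreeGroup.of ()) * Monoid.Coprod.inl b)

theorem phi_comp_eqnSubst (a b : H) (g : F) :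
    (phi H g).comp (eqnSubst a b) = phi H (a * g * b) := by
  ext <;> simp [phi, eqnSubst]

theorem eqnSubst_injective (a b : H) : Function.Injective (eqnSubst a b) := by
  have hinv : (eqnSubst a⁻¹ b⁻¹).comp (eqnSubst a b) = MonoidHom.id _ := by
    ext <;> simp [eqnSubst, mul_assoc]
  exact Function.LeftInverse.injective (DFunLike.congr_fun hinv)

theorem eqnDegree_eqnSubst_le (a b : H) (w : H ∗ FreeGroup Unit) :
    eqnDegree (eqnSubst a b w) ≤ eqnDegree w := by
  refine le_eqnDegree_of_subadditive (ℓ := fun w => eqnDegree (eqnSubst a b w))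
    (fun u v => ?_) (fun h => ?_) ?_ ?_ w
  · simpa using eqnDegree_mul_le _ _
  · simpa [eqnSubst] using eqnDegree_inl h
  · simpa [eqnSubst] using eqnDegree_inl_mul_inr_mul_inl_le a b 1
  · simpa [eqnSubst, mul_assoc] using eqnDegree_inl_mul_inr_mul_inl_le b⁻¹ a⁻¹ (-1)

theorem Depends.of_mul_mul (h : Depends H (a * g * b)) : Depends H g := fun hinj =>
  h (phi_comp_eqnSubst a b g ▸ hinj.comp (eqnSubst_injective a b))

/-- `g` satisfies a nontrivial equation over `H` of degree at most `n`. -/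
def HasEqnOfDegreeLE (H : Subgroup F) (g : F) (n : ℕ) : Prop :=
  ∃ w : H ∗ FreeGroup Unit, w ∈ (phi H g).ker ∧ w ≠ 1 ∧ eqnDegree w ≤ n

theorem Depends.exists_hasEqnOfDegreeLE (h : Depends H g) : ∃ n, HasEqnOfDegreeLE H g n := by
  rw [Depends, injective_iff_map_eq_one] at h
  push Not at h
  obtain ⟨w, hw, hw1⟩ := h
  exact ⟨_, w, hw, hw1, le_rfl⟩

theorem HasEqnOfDegreeLE.of_mul_mul (h : HasEqnOfDegreeLE H (a * g * b) n) :
    HasEqnOfDegreeLE H g n := by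
  obtain ⟨w, hw, hw1, hn⟩ := h
  refine ⟨eqnSubst a b w, ?_, ?_, (eqnDegree_eqnSubst_le a b w).trans hn⟩
  · rwa [MonoidHom.mem_ker, ← MonoidHom.comp_apply, phi_comp_eqnSubst]
  · rwa [Ne, map_eq_one_iff _ (eqnSubst_injective a b)]

open scoped Pointwise in
theorem exists_forall_hasEqnOfDegreeLE {D : Set F} (hD : D.Finite)
    (hdep : depSet H ⊆ H * D * H) : ∃ n, ∀ g, Depends H g → HasEqnOfDegreeLE H g n := by
  have hdeg (d : F) : ∃ n, Depends H d → HasEqnOfDegreeLE H d n := by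
    by_cases hd : Depends H d
    · exact hd.exists_hasEqnOfDegreeLE.imp fun n hn _ => hn
    · exact ⟨0, fun h => absurd h hd⟩
  choose N hN using hdeg
  obtain ⟨n, hn⟩ := (hD.image N).bddAbove
  refine ⟨n, fun g hg => ?_⟩
  obtain ⟨_, ⟨a, ha, d, hd, rfl⟩, b, hb, rfl⟩ := hdep hg
  have hdd : Depends H d := Depends.of_mul_mul (a := ⟨a, ha⟩) (b := ⟨b, hb⟩) hg
  obtain ⟨w, hw, hw1, hwN⟩ := hN d hdd
  have hle : eqnDegree w ≤ n := hwN.trans (hn (Set.mem_image_of_mem N hd))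
  refine HasEqnOfDegreeLE.of_mul_mul (a := ⟨a, ha⟩⁻¹) (b := ⟨b, hb⟩⁻¹) ⟨w, ?_, hw1, hle⟩
  simpa [mul_assoc] using hw

end Equations

namespace CayleyTree

open FreeGroup
open scoped Pointwise

section ReducedWords

variable {α : Type*}

theorem exists_eq_append_append_head?_ne {β : Type*} (u v : List β) :
    ∃ m s t, u = m ++ s ∧ v = m ++ t ∧ ∀ x ∈ s.head?, x ∉ t.head? := by
  classical
  induction u generalizing v with
  | nil => exact ⟨[], [], v, by simp⟩
  | cons x u ih =>
    rcases v with _ | ⟨y, v⟩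
    · exact ⟨[], x :: u, [], by simp⟩
    obtain rfl | hxy := eq_or_ne x y
    · obtain ⟨m, s, t, rfl, rfl, hst⟩ := ih v
      exact ⟨x :: m, s, t, rfl, rfl, hst⟩
    · exact ⟨[], x :: u, y :: v, by simpa using hxy.symm⟩

theorem isReduced_invRev {s : List (α × Bool)} (hs : IsReduced s) : IsReduced (invRev s) := by
  classical rw [isReduced_iff_reduce_eq, reduce_invRev, hs.reduce_eq]

theorem isReduced_invRev_append {s t : List (α × Bool)} (hs : IsReduced s) (ht : IsReduced t)
    (hst : ∀ x ∈ s.head?, x ∉ t.head?) : IsReduced (invRev s ++ t) := by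
  refine List.isChain_append.2 ⟨isReduced_invRev hs, ht, fun x hx y hy hxy => ?_⟩
  simp only [invRev, List.getLast?_reverse, List.head?_map, Option.mem_def,
    Option.map_eq_some_iff] at hx
  obtain ⟨z, hz, rfl⟩ := hx
  by_contra hne
  refine hst z hz (Option.mem_def.2 (hy.trans (congrArg some (Prod.ext hxy.symm ?_))))
  simpa [eq_comm, Bool.not_eq] using hne

end ReducedWords

variable {α : Type*} [DecidableEq α] {a b c f m p q r s y z g h : FreeGroup α}

/-- The distance between the vertices `a` and `b` of the Cayley tree of the free group. -/
def wordDist (a b : FreeGroup α) : ℕ := (a⁻¹ * b).norm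

theorem wordDist_comm (a b : FreeGroup α) : wordDist a b = wordDist b a := by
  simpa [wordDist] using norm_inv_eq (x := b⁻¹ * a)

theorem wordDist_triangle (a b c : FreeGroup α) :
    wordDist a c ≤ wordDist a b + wordDist b c := by
  simpa [wordDist, mul_assoc] using norm_mul_le (a⁻¹ * b) (b⁻¹ * c)

@[simp]
theorem wordDist_mul_left (h a b : FreeGroup α) : wordDist (h * a) (h * b) = wordDist a b := by
  simp [wordDist, mul_assoc]

@[simp]
theorem wordDist_self (a : FreeGroup α) : wordDist a a = 0 := by
  simp [wordDist]

theorem wordDist_eq_zero : wordDist a b = 0 ↔ a = b := by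
  rw [wordDist, FreeGroup.norm_eq_zero, inv_mul_eq_one]

/-- The set of vertices on the geodesic from `a` to `b` in the Cayley tree. -/
def geodesic (a b : FreeGroup α) : Set (FreeGroup α) :=
  {f | wordDist a f + wordDist f b = wordDist a b}

theorem mem_geodesic : f ∈ geodesic a b ↔ wordDist a f + wordDist f b = wordDist a b := Iff.rfl

theorem geodesic_comm (a b : FreeGroup α) : geodesic a b = geodesic b a := by
  ext f
  rw [mem_geodesic, mem_geodesic, wordDist_comm b f, wordDist_comm f a, wordDist_comm b a,
    add_comm]

theorem left_mem_geodesic (a b : FreeGroup α) : a ∈ geodesic a b := by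
  simp [mem_geodesic]

theorem smul_geodesic (h a b : FreeGroup α) : h • geodesic a b = geodesic (h * a) (h * b) := by
  ext f
  rw [Set.mem_smul_set_iff_inv_smul_mem, smul_eq_mul, mem_geodesic, mem_geodesic,
    ← wordDist_mul_left h a, ← wordDist_mul_left h (h⁻¹ * f), ← wordDist_mul_left h a b,
    mul_inv_cancel_left]

theorem mem_geodesic_iff_isPrefix :
    f ∈ geodesic a b ↔ (a⁻¹ * f).toWord <+: (a⁻¹ * b).toWord := by
  have hmul : a⁻¹ * f * (f⁻¹ * b) = a⁻¹ * b := by group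
  refine ⟨fun hf => ?_, fun ⟨t, ht⟩ => ?_⟩
  · have hsub := toWord_mul_sublist (a⁻¹ * f) (f⁻¹ * b)
    rw [hmul] at hsub
    exact hsub.eq_of_length (List.length_append ▸ hf.symm) ▸ List.prefix_append _ _
  · refine le_antisymm ?_ (wordDist_triangle a f b)
    have hfb : f⁻¹ * b = mk t := by
      rw [← mul_right_inj (a⁻¹ * f), hmul, ← mk_toWord (x := a⁻¹ * f), mul_mk, ht, mk_toWord]
    calc wordDist a f + wordDist f b ≤ (a⁻¹ * f).toWord.length + t.length :=
          Nat.add_le_add_left (by rw [wordDist, hfb]; exact norm_mk_le) _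
      _ = wordDist a b := by rw [← List.length_append, ht]; rfl

theorem finite_geodesic (a b : FreeGroup α) : (geodesic a b).Finite := by
  refine .of_finite_image (f := fun f => (a⁻¹ * f).toWord) (Set.Finite.subset
    ((a⁻¹ * b).toWord.inits.finite_toSet) ?_) fun x _ y _ hxy => by simpa using hxy
  rintro _ ⟨f, hf, rfl⟩
  exact (List.mem_inits _ _).2 (mem_geodesic_iff_isPrefix.1 hf)

theorem exists_median (a b c : FreeGroup α) :
    ∃ m ∈ geodesic a b, m ∈ geodesic a c ∧ m ∈ geodesic b c := by
  obtain ⟨u, s, t, hs, ht, hst⟩ :=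
    exists_eq_append_append_head?_ne (a⁻¹ * b).toWord (a⁻¹ * c).toWord
  obtain ⟨hu, hs', -⟩ := List.isChain_append.1 (hs ▸ isReduced_toWord : IsReduced (u ++ s))
  obtain ⟨-, ht', -⟩ := List.isChain_append.1 (ht ▸ isReduced_toWord : IsReduced (u ++ t))
  have hb : b = a * mk u * mk s := by rw [mul_assoc, mul_mk, ← hs, mk_toWord, mul_inv_cancel_left]
  have hc : c = a * mk u * mk t := by rw [mul_assoc, mul_mk, ← ht, mk_toWord, mul_inv_cancel_left]
  have hbm : b⁻¹ * (a * mk u) = mk (invRev s) := by rw [hb, ← inv_mk]; group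
  have hbc : b⁻¹ * c = mk (invRev s ++ t) := by rw [hb, hc, ← mul_mk, ← inv_mk]; group
  have hm : (a⁻¹ * (a * mk u)).toWord = u := by
    rw [inv_mul_cancel_left, toWord_mk, IsReduced.reduce_eq hu]
  refine ⟨a * mk u, ?_, ?_, ?_⟩ <;> rw [mem_geodesic_iff_isPrefix]
  · exact ⟨s, by rw [hm, hs]⟩
  · exact ⟨t, by rw [hm, ht]⟩
  · rw [hbm, hbc, toWord_mk, toWord_mk, (isReduced_invRev hs').reduce_eq,
      (isReduced_invRev_append hs' ht' hst).reduce_eq]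
    exact List.prefix_append _ _

theorem geodesic_subset_left (hm : m ∈ geodesic a b) : geodesic a m ⊆ geodesic a b := by
  intro f hf
  have hmfb := wordDist_triangle f m b
  have hafb := wordDist_triangle a f b
  rw [mem_geodesic] at *
  omega

theorem geodesic_subset_right (hm : m ∈ geodesic a b) : geodesic m b ⊆ geodesic a b := by
  rw [geodesic_comm a b] at hm ⊢
  exact geodesic_comm m b ▸ geodesic_subset_left hm

theorem geodesic_subset_of_mem (hm : m ∈ geodesic a b) :
    geodesic a b ⊆ geodesic a m ∪ geodesic m b := by
  intro f hf
  refine (List.prefix_or_prefix_of_prefix (mem_geodesic_iff_isPrefix.1 hf)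
    (mem_geodesic_iff_isPrefix.1 hm)).imp mem_geodesic_iff_isPrefix.2 fun h => ?_
  have hmf : m ∈ geodesic a f := mem_geodesic_iff_isPrefix.2 h
  rw [mem_geodesic] at *
  omega

theorem geodesic_subset_union (a b c : FreeGroup α) :
    geodesic a c ⊆ geodesic a b ∪ geodesic b c := by
  obtain ⟨m, hab, hac, hbc⟩ := exists_median a b c
  exact (geodesic_subset_of_mem hac).trans
    (Set.union_subset_union (geodesic_subset_left hab) (geodesic_subset_right hbc))

theorem eq_of_mem_geodesic (hab : a ∈ geodesic c b) (hba : b ∈ geodesic c a) : a = b := by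
  rw [mem_geodesic] at hab hba
  rw [wordDist_comm b a] at hba
  exact wordDist_eq_zero.1 (by omega)

/-- The vertices lying in the same component as `y` after the vertex `p` is removed from the
Cayley tree; empty for `y = p`. -/
def shadow (p y : FreeGroup α) : Set (FreeGroup α) := {f | p ∉ geodesic y f}

theorem mem_shadow : f ∈ shadow p y ↔ p ∉ geodesic y f := Iff.rfl

theorem notMem_shadow : f ∉ shadow p y ↔ p ∈ geodesic y f := not_not

theorem self_mem_shadow : y ∈ shadow p y ↔ p ≠ y := by
  simp [mem_shadow, mem_geodesic, ← wordDist_eq_zero, wordDist_comm y p]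

theorem smul_shadow (h p y : FreeGroup α) : h • shadow p y = shadow (h * p) (h * y) := by
  ext f
  rw [Set.mem_smul_set_iff_inv_smul_mem, mem_shadow, mem_shadow,
    ← Set.smul_mem_smul_set_iff (a := h), smul_geodesic, smul_eq_mul, smul_eq_mul,
    mul_inv_cancel_left]

theorem mul_mem_shadow : h * f ∈ shadow (h * p) (h * y) ↔ f ∈ shadow p y := by
  rw [← smul_shadow, ← smul_eq_mul, Set.smul_mem_smul_set_iff]

theorem shadow_subset_shadow (hy : z ∈ shadow p y) : shadow p z ⊆ shadow p y :=
  fun _ hf hp => (geodesic_subset_union y z _ hp).elim hy hf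

theorem compl_shadow_subset (hpy : p ≠ y) : (shadow y p)ᶜ ⊆ shadow p y := fun f hf hp =>
  hpy (eq_of_mem_geodesic (geodesic_comm y f ▸ hp) (geodesic_comm p f ▸ notMem_shadow.1 hf))

theorem disjoint_shadow (hrs : r ≠ s) (hs : s ∉ shadow r y) (hr : r ∉ shadow s z) :
    Disjoint (shadow r y) (shadow s z) := by
  refine Set.disjoint_left.2 fun f hfr hfs => hrs (eq_of_mem_geodesic (c := f) ?_ ?_)
  · exact (geodesic_subset_union y f s (notMem_shadow.1 hs)).resolve_left hfr
  · exact (geodesic_subset_union z f r (notMem_shadow.1 hr)).resolve_left hfs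

theorem norm_pow_le_norm_pow_succ (a : FreeGroup α) (n : ℕ) :
    (a ^ n).norm ≤ (a ^ (n + 1)).norm := by
  cases n with
  | zero => simp
  | succ n =>
    simp only [FreeGroup.norm, toWord_pow,
      reduceCyclically.reduce_flatten_replicate_succ isReduced_toWord, List.length_append]
    simp only [List.replicate_succ, List.flatten_cons, List.length_append]
    omega

theorem pow_succ_mul_mem_shadow (hg : g ≠ 1) (p : FreeGroup α) (n : ℕ) :
    g ^ (n + 1) * p ∈ shadow p (g * p) := by
  intro hp
  have hdist (k : ℕ) : wordDist p (g ^ k * p) = ((p⁻¹ * g * p) ^ k).norm := by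
    have hconj : (p⁻¹ * g * p) ^ k = p⁻¹ * g ^ k * p := by simpa using conj_pow (a := p⁻¹)
    rw [hconj, wordDist, mul_assoc]
  have hshift : wordDist (g * p) (g ^ (n + 1) * p) = wordDist p (g ^ n * p) := by
    rw [pow_succ', mul_assoc, wordDist_mul_left]
  rw [mem_geodesic, hshift, hdist, hdist] at hp
  have hle := norm_pow_le_norm_pow_succ (p⁻¹ * g * p) n
  have hgp : g * p = p := wordDist_eq_zero.1 (by omega)
  exact hg (mul_eq_right.1 hgp)

/-- A convex set of vertices of the Cayley tree; the nonempty ones are its subtrees. -/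
def IsConvex (T : Set (FreeGroup α)) : Prop := ∀ a ∈ T, ∀ b ∈ T, geodesic a b ⊆ T

variable {T : Set (FreeGroup α)} {H : Subgroup (FreeGroup α)}

theorem IsConvex.disjoint_shadow (hT : IsConvex T) (hp : p ∈ T)
    (hmin : ∀ b ∈ T, wordDist p y ≤ wordDist b y) : Disjoint T (shadow p y) := by
  refine Set.disjoint_left.2 fun b hb hpb => hpb ?_
  obtain ⟨m, hpm, hmb, hmy⟩ := exists_median p y b
  have hle := hmin m (hT p hp b hb hmb)
  obtain rfl : p = m := wordDist_eq_zero.1 (by rw [mem_geodesic] at hpm; omega)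
  exact hmy

/-- The path from `p ∈ T` to `g * q ∈ g • T` is a bridge between `T` and `g • T`: it is nontrivial,
the component it enters on leaving `p` avoids `T`, and the component it enters on leaving `g * q`
backwards avoids `g • T`. The last condition is translated by `g⁻¹` to a condition on `T`. -/
structure IsBridge (T : Set (FreeGroup α)) (g p q : FreeGroup α) : Prop where
  left_mem : p ∈ T
  right_mem : q ∈ T
  ne : p ≠ g * q
  disjoint_left : Disjoint T (shadow p (g * q))
  disjoint_right : Disjoint T (shadow q (g⁻¹ * p))

theorem IsConvex.exists_isBridge (hT : IsConvex T) (hne : T.Nonempty) (hg : g ∉ T * T⁻¹) :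
    ∃ p q, IsBridge T g p q := by
  obtain ⟨⟨p, q⟩, ⟨hp, hq⟩, hmin⟩ := exists_minimalFor_of_wellFoundedLT (· ∈ T ×ˢ T)
    (fun x => wordDist x.1 (g * x.2)) (hne.prod hne)
  have hmin' {a b : FreeGroup α} (ha : a ∈ T) (hb : b ∈ T) :
      wordDist p (g * q) ≤ wordDist a (g * b) :=
    (le_total _ _).elim id (hmin (j := (a, b)) ⟨ha, hb⟩)
  refine ⟨p, q, hp, hq, ?_, ?_, ?_⟩
  · rintro rfl
    exact hg ⟨g * q, hp, q⁻¹, Set.inv_mem_inv.2 hq, mul_inv_cancel_right g q⟩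
  · exact hT.disjoint_shadow hp fun b hb => hmin' hb hq
  · refine hT.disjoint_shadow hq fun b hb => ?_
    rw [← wordDist_mul_left g q, ← wordDist_mul_left g b, mul_inv_cancel_left,
      wordDist_comm _ p, wordDist_comm _ p]
    exact hmin' hp hb

/-- The union of the component that the path from `p` to `g * q` enters on leaving `p` and the
component that its translate by `g⁻¹` enters on leaving `q`. For a bridge, this is the set into
which the nontrivial powers of `g` move its complement. -/
def branches (g p q : FreeGroup α) : Set (FreeGroup α) :=
  shadow p (g * q) ∪ shadow q (g⁻¹ * p)

namespace IsBridge

theorem symm (hb : IsBridge T g p q) : IsBridge T g⁻¹ q p where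
  left_mem := hb.right_mem
  right_mem := hb.left_mem
  ne hq := hb.ne (by rw [hq, mul_inv_cancel_left])
  disjoint_left := hb.disjoint_right
  disjoint_right := (inv_inv g).symm ▸ hb.disjoint_left

theorem mul_inv (hb : IsBridge T g p q) (hh : h ∈ MulAction.stabilizer (FreeGroup α) T) :
    IsBridge T (g * h⁻¹) p (h * q) where
  left_mem := hb.left_mem
  right_mem := by
    rw [← MulAction.mem_stabilizer_iff.1 hh]
    exact Set.smul_mem_smul_set hb.right_mem
  ne := by simpa [mul_assoc] using hb.ne
  disjoint_left := by simpa [mul_assoc] using hb.disjoint_left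
  disjoint_right := by
    rw [← MulAction.mem_stabilizer_iff.1 hh, mul_inv_rev, inv_inv, mul_assoc, ← smul_shadow]
    exact Set.disjoint_smul_set.2 hb.disjoint_right

theorem mul_mem_shadow (hb : IsBridge T g p q) (hf : f ∉ shadow q (g⁻¹ * p)) :
    g * f ∈ shadow p (g * q) := by
  refine compl_shadow_subset hb.ne fun hgf => hf ?_
  simpa using (CayleyTree.mul_mem_shadow (h := g⁻¹)).2 hgf

theorem pow_succ_mul_mem_shadow (hb : IsBridge T g p q) (n : ℕ) (hf : f ∉ shadow q (g⁻¹ * p)) :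
    g ^ (n + 1) * f ∈ shadow p (g * q) := by
  obtain rfl | hpq := eq_or_ne p q
  · -- Induction fails: the branches at `p` towards `g * p` and `g⁻¹ * p` may coincide.
    have hg : g ≠ 1 := fun hg => hb.ne (by rw [hg, one_mul])
    have hinv := CayleyTree.pow_succ_mul_mem_shadow (inv_ne_one.2 hg) p n
    have hne : p ≠ g ^ (n + 1) * p := by simpa using hg
    have hf' := fun h => hf (shadow_subset_shadow hinv h)
    refine shadow_subset_shadow (CayleyTree.pow_succ_mul_mem_shadow hg p n)
      (compl_shadow_subset hne fun hgf => hf' ?_)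
    simpa using (CayleyTree.mul_mem_shadow (h := (g ^ (n + 1))⁻¹)).2 hgf
  · induction n with
    | zero => simpa using hb.mul_mem_shadow hf
    | succ n ih =>
      have hdisj : Disjoint (shadow p (g * q)) (shadow q (g⁻¹ * p)) :=
        CayleyTree.disjoint_shadow hpq (Set.disjoint_left.1 hb.disjoint_left hb.right_mem)
          (Set.disjoint_left.1 hb.disjoint_right hb.left_mem)
      rw [pow_succ', mul_assoc]
      exact hb.mul_mem_shadow (Set.disjoint_left.1 hdisj ih)

theorem zpow_mul_mem_branches (hb : IsBridge T g p q) {n : ℤ} (hn : n ≠ 0)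
    (hf : f ∉ branches g p q) : g ^ n * f ∈ branches g p q := by
  obtain ⟨hfp, hfq⟩ := not_or.1 hf
  obtain ⟨m, rfl | rfl⟩ := n.eq_nat_or_neg <;> obtain ⟨k, rfl⟩ := Nat.exists_eq_succ_of_ne_zero
    (n := m) (by rintro rfl; simp at hn)
  · exact .inl (mod_cast hb.pow_succ_mul_mem_shadow k hfq)
  · right
    rw [zpow_neg, ← inv_zpow]
    exact mod_cast hb.symm.pow_succ_mul_mem_shadow k (by simpa using hfp)

end IsBridge

theorem disjoint_smul_shadow (hh : h ∈ MulAction.stabilizer (FreeGroup α) T) (hr : r ∈ T)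
    (hs : s ∈ T) (hrs : h * r ≠ s) (hTr : Disjoint T (shadow r y)) (hTs : Disjoint T (shadow s z)) :
    Disjoint (h • shadow r y) (shadow s z) := by
  rw [MulAction.mem_stabilizer_iff] at hh
  rw [smul_shadow]
  refine disjoint_shadow hrs (Set.disjoint_left.1 ?_ (hh.symm ▸ hs))
    (Set.disjoint_left.1 hTs (hh ▸ Set.smul_mem_smul_set hr))
  rw [← smul_shadow]
  exact Set.disjoint_smul_set.2 hTr

theorem IsBridge.disjoint_smul_branches (hb : IsBridge T g p q)
    (hh : h ∈ MulAction.stabilizer (FreeGroup α) T) (hh1 : h ≠ 1) (hpq : h * p ≠ q)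
    (hqp : h * q ≠ p) :
    Disjoint (h • branches g p q) (branches g p q) := by
  obtain ⟨hp, hq, -, hTp, hTq⟩ := hb
  have hself (r : FreeGroup α) : h * r ≠ r := mul_ne_right.2 hh1
  simp only [branches, Set.smul_set_union, Set.disjoint_union_left, Set.disjoint_union_right]
  exact ⟨⟨disjoint_smul_shadow hh hp hp (hself p) hTp hTp,
    disjoint_smul_shadow hh hq hp hqp hTq hTp⟩,
    disjoint_smul_shadow hh hp hq hpq hTp hTq,
    disjoint_smul_shadow hh hq hq (hself q) hTq hTq⟩

theorem IsBridge.injective_phi (hb : IsBridge T g p q)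
    (hH : H ≤ MulAction.stabilizer (FreeGroup α) T) (hpq : ∀ h ∈ H, p = h * q → h = 1) :
    Function.Injective (phi H g) := by
  have hcard : 3 ≤ Cardinal.mk (FreeGroup Unit) :=
    Cardinal.ofNat_lt_aleph0.le.trans (Cardinal.aleph0_le_mk _)
  have hp : p ∉ branches g p q := not_or.2
    ⟨Set.disjoint_left.1 hb.disjoint_left hb.left_mem,
      Set.disjoint_left.1 hb.disjoint_right hb.left_mem⟩
  have hgq : g * q ∈ branches g p q := .inl (self_mem_shadow.2 hb.ne)
  refine coprodLift_injective_of_ping_pong H.subtype _ (.inr hcard)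
    (U := (branches g p q)ᶜ) ⟨p, hp⟩ ⟨g * q, hgq⟩ disjoint_compl_left (fun h hh1 => ?_)
    fun z hz => ?_
  · have hh1' : (h : FreeGroup α) ≠ 1 := by simpa using hh1
    refine Set.subset_compl_iff_disjoint_right.2 (hb.disjoint_smul_branches (hH h.2) hh1' ?_ ?_)
    · exact fun h' => hh1' (inv_eq_one.1 (hpq _ (inv_mem h.2) (eq_inv_mul_of_mul_eq h')))
    · exact fun h' => hh1' (hpq h h.2 h'.symm)
  · obtain ⟨n, rfl⟩ := exists_of_zpow_eq z
    rintro _ ⟨f, hf, rfl⟩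
    have hn : n ≠ 0 := by rintro rfl; simp at hz
    simpa using hb.zpow_mul_mem_branches hn hf

theorem IsBridge.not_depends (hb : IsBridge T g p q)
    (hH : H ≤ MulAction.stabilizer (FreeGroup α) T) : ¬ Depends H g := by
  by_cases hpq : ∀ h ∈ H, p = h * q → h = 1
  · exact not_not.2 (hb.injective_phi hH hpq)
  · -- Replacing `g` by `g * h⁻¹` moves the endpoint `q` to `h * q = p`.
    push Not at hpq
    obtain ⟨h, hh, rfl, -⟩ := hpq
    have hinj : Function.Injective (phi H (g * h⁻¹)) :=
      (hb.mul_inv (hH hh)).injective_phi hH fun k _ hk => by simpa using hk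
    refine fun hg => Depends.of_mul_mul (a := 1) (b := ⟨h, hh⟩) ?_ hinj
    simpa using hg

theorem IsConvex.depSet_subset (hT : IsConvex T) (hne : T.Nonempty)
    (hH : H ≤ MulAction.stabilizer (FreeGroup α) T) : depSet H ⊆ T * T⁻¹ := by
  refine fun g hg => by_contra fun hgT => ?_
  obtain ⟨p, q, hb⟩ := hT.exists_isBridge hne hgT
  exact hb.not_depends hH hg

/-- The subtree of the Cayley tree spanned by the elements of `H`. -/
def hull (H : Subgroup (FreeGroup α)) : Set (FreeGroup α) := ⋃ h ∈ H, geodesic 1 h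

theorem mem_hull : f ∈ hull H ↔ ∃ h ∈ H, f ∈ geodesic 1 h := by
  simp [hull]

theorem isConvex_hull (H : Subgroup (FreeGroup α)) : IsConvex (hull H) := by
  intro a ha b hb f hf
  obtain ⟨h, hh, ha⟩ := mem_hull.1 ha
  obtain ⟨k, hk, hb⟩ := mem_hull.1 hb
  obtain hf | hf := geodesic_subset_union a 1 b hf
  · exact mem_hull.2 ⟨h, hh, geodesic_subset_left ha (geodesic_comm a 1 ▸ hf)⟩
  · exact mem_hull.2 ⟨k, hk, geodesic_subset_left hb hf⟩

theorem hull_nonempty (H : Subgroup (FreeGroup α)) : (hull H).Nonempty :=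
  ⟨1, mem_hull.2 ⟨1, one_mem H, left_mem_geodesic 1 1⟩⟩

theorem smul_hull_subset (hh : h ∈ H) : h • hull H ⊆ hull H := by
  rintro _ ⟨f, hf, rfl⟩
  obtain ⟨k, hk, hf⟩ := mem_hull.1 hf
  have hhf : h * f ∈ geodesic h (h * k) := by
    simpa [smul_geodesic] using Set.smul_mem_smul_set (a := h) hf
  obtain hf | hf := geodesic_subset_union h 1 (h * k) hhf
  · exact mem_hull.2 ⟨h, hh, geodesic_comm h 1 ▸ hf⟩
  · exact mem_hull.2 ⟨h * k, mul_mem hh hk, hf⟩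

theorem le_stabilizer_hull (H : Subgroup (FreeGroup α)) :
    H ≤ MulAction.stabilizer (FreeGroup α) (hull H) := fun _ hh =>
  MulAction.mem_stabilizer_iff.2
    ((smul_hull_subset hh).antisymm (Set.subset_smul_set_iff.2 (smul_hull_subset (inv_mem hh))))

theorem hull_closure_subset (S : Set (FreeGroup α)) :
    hull (Subgroup.closure S) ⊆ Subgroup.closure S * ⋃ s ∈ insert 1 S, geodesic 1 s := by
  set K : Set (FreeGroup α) := Subgroup.closure S * ⋃ s ∈ insert 1 S, geodesic 1 s with hK
  have hsmul {k : FreeGroup α} (hk : k ∈ Subgroup.closure S) : k • K ⊆ K := by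
    rw [hK, ← smul_mul_assoc, smul_coe_set hk]
  have hgen {s : FreeGroup α} (hs : s ∈ insert 1 S) : geodesic 1 s ⊆ K := fun f hf =>
    ⟨1, one_mem _, f, Set.mem_biUnion hs hf, one_mul f⟩
  refine Set.iUnion₂_subset fun h hh => ?_
  induction hh using Subgroup.closure_induction with
  | mem s hs => exact hgen (.inr hs)
  | one => exact hgen (.inl rfl)
  | mul x y hx _ hxK hyK =>
    refine (geodesic_subset_union 1 x (x * y)).trans (Set.union_subset hxK ?_)
    simpa [smul_geodesic] using (Set.smul_set_mono (a := x) hyK).trans (hsmul hx)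
  | inv x hx hxK =>
    rw [geodesic_comm]
    simpa [smul_geodesic] using (Set.smul_set_mono (a := x⁻¹) hxK).trans (hsmul (inv_mem hx))

theorem exists_finite_hull_subset (hH : H.FG) :
    ∃ P : Set (FreeGroup α), P.Finite ∧ hull H ⊆ H * P := by
  obtain ⟨S, rfl⟩ := hH
  refine ⟨⋃ s ∈ insert 1 (S : Set (FreeGroup α)), geodesic 1 s, ?_, hull_closure_subset _⟩
  exact (S.finite_toSet.insert 1).biUnion fun s _ => finite_geodesic 1 s

end CayleyTree

section DoubleCosets

open CayleyTree
open scoped Pointwise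

theorem exists_finite_depSet_subset_of_freeGroup {α : Type*}
    {H : Subgroup (FreeGroup α)} (hH : H.FG) :
    ∃ D : Set (FreeGroup α), D.Finite ∧ depSet H ⊆ H * D * H := by
  classical
  obtain ⟨P, hP, hHP⟩ := exists_finite_hull_subset hH
  refine ⟨P * P⁻¹, hP.mul hP.inv, ?_⟩
  calc depSet H ⊆ hull H * (hull H)⁻¹ :=
        (isConvex_hull H).depSet_subset (hull_nonempty H) (le_stabilizer_hull H)
    _ ⊆ H * P * (H * P)⁻¹ := Set.mul_subset_mul hHP (Set.inv_subset_inv.2 hHP)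
    _ = H * (P * P⁻¹) * H := by rw [mul_inv_rev, inv_coe_set, mul_assoc, mul_assoc, mul_assoc]

theorem exists_finite_depSet_subset [Group F] [IsFreeGroup F] {H : Subgroup F} (hH : H.FG) :
    ∃ D : Set F, D.Finite ∧ depSet H ⊆ H * D * H := by
  classical
  let e := IsFreeGroup.toFreeGroup F
  obtain ⟨D, hD, hdep⟩ := exists_finite_depSet_subset_of_freeGroup (H := H.map e.toMonoidHom)
    (by obtain ⟨S, rfl⟩ := hH; exact ⟨S.image e, by simp [MonoidHom.map_closure]⟩)
  refine ⟨e ⁻¹' D, hD.preimage e.injective.injOn, fun g hg => ?_⟩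
  obtain ⟨_, ⟨_, ⟨a, ha, rfl⟩, d, hd, rfl⟩, _, ⟨b, hb, rfl⟩, hgd⟩ := hdep (Depends.map e hg)
  refine ⟨a * e.symm d, ⟨a, ha, e.symm d, by simpa using hd, rfl⟩, b, hb, e.injective ?_⟩
  simpa using hgd

end DoubleCosets

/-- for finitely generated `H` there is a bound `n` such that every `g`
depending on `H` satisfies a nontrivial equation over `H` of degree at most `n`. -/
theorem exists_degree_bound [Group F] [IsFreeGroup F] (H : Subgroup F) (hH : H.FG) :
    ∃ n : ℕ, ∀ g : F, Depends H g →
      ∃ w : ↥H ∗ FreeGroup Unit, w ∈ (phi H g).ker ∧ w ≠ 1 ∧ eqnDegree w ≤ n := by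
  obtain ⟨D, hD, hdep⟩ := exists_finite_depSet_subset hH
  exact exists_forall_hasEqnOfDegreeLE hD hdep
end
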